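/- Let X be a finite group possessing a Hall π-subgroup, and let T be a subnormal subgroup of X of defect at most 2 (i.e., T ⊴ M ⊴ X for some M). Then T possesses a Hall π-subgroup. -/

import Mathlib

/-- A Hall π-subgroup: every prime divisor of its order lies in π,
and its index is coprime to every prime in π. -/
def IsHallPi (π : Set ℕ) {G : Type*} [Group G] (H : Subgroup G) : Prop :=
  (∀ p : ℕ, p.Prime → p ∣ Nat.card H → p ∈ π) ∧
  (∀ p ∈ π, p.Prime → ¬ p ∣ H.index)

theorem relIndex_dvd_index_of_normal_right {G : Type*} [Group G] [Finite G]
    (H N : Subgroup G) (hN : N.Normal) : H.relIndex N ∣ H.index := by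
  have h1 := Subgroup.relIndex_mul_relIndex (H ⊓ N) H (H ⊔ N) inf_le_left le_sup_left
  have h2 := Subgroup.relIndex_mul_relIndex (H ⊓ N) N (H ⊔ N) inf_le_right le_sup_right
  rw [Subgroup.inf_relIndex_left] at h1
  rw [Subgroup.inf_relIndex_right, Subgroup.relIndex_sup_right] at h2
  have h0 : N.relIndex H ≠ 0 := Subgroup.index_ne_zero_of_finite
  have h3 : H.relIndex N = H.relIndex (H ⊔ N) := by
    apply Nat.eq_of_mul_eq_mul_left (Nat.pos_of_ne_zero h0)
    rw [h1, ← h2, mul_comm]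
  rw [h3]
  exact Subgroup.relIndex_dvd_index_of_le le_sup_left

theorem hall_subgroup_of_subnormal_defect_two {X : Type*} [Group X] [Finite X] (π : Set ℕ)
    (H : Subgroup X) (hH : IsHallPi π H)
    (M : Subgroup X) (hM : M.Normal)
    (T : Subgroup X) (hTM : T ≤ M) (hT : (T.subgroupOf M).Normal) :
    ∃ K : Subgroup T, IsHallPi π K := by
  refine ⟨H.subgroupOf T, fun p hp hd => hH.1 p hp (hd.trans ?_), fun p hpi hp hd =>
    hH.2 p hpi hp (hd.trans ?_)⟩
  · exact Subgroup.card_comap_dvd_of_injective H T.subtype T.subtype_injective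
  · have h1 := relIndex_dvd_index_of_normal_right (H.subgroupOf M) (T.subgroupOf M) hT
    rw [Subgroup.relIndex_subgroupOf hTM] at h1
    exact h1.trans (relIndex_dvd_index_of_normal_right H M hM)
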